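/- arXiv:1205.3454 — 2 statements merged into one kernel-verified Lean document; each statement's English description precedes it below -/
import Mathlib

section
/- Let S be an idempotent covered semigroup and let (s,t,α), (u,v,β) ∈ T(S). Then (s,t,α) 𝓡 (u,v,β) in T(S) if and only if t 𝓡 v in S and there exists a ∈ S¹ with s = at and u = av. -/
namespace SemibandEmbed

/-- The two-element right-zero semigroup `R₂ = {σ, τ}`. -/
inductive R2 : Type where
  | σ : R2
  | τ : R2
  deriving DecidableEq

section GreenDefs

variable {S : Type*} [Semigroup S]

/-- Green's relation 𝓡 : `a 𝓡 b` iff `a S¹ = b S¹` (inside `S¹ = WithOne S`). -/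
def greenR (a b : S) : Prop :=
  {x : WithOne S | ∃ u : WithOne S, x = (a : WithOne S) * u} =
    {x : WithOne S | ∃ u : WithOne S, x = (b : WithOne S) * u}

/-- Green's relation 𝓛 : `a 𝓛 b` iff `S¹ a = S¹ b`. -/
def greenL (a b : S) : Prop :=
  {x : WithOne S | ∃ u : WithOne S, x = u * (a : WithOne S)} =
    {x : WithOne S | ∃ u : WithOne S, x = u * (b : WithOne S)}

/-- Green's relation 𝓗 = 𝓛 ∩ 𝓡. -/
def greenH (a b : S) : Prop := greenL a b ∧ greenR a b

/-- Green's relation 𝓓 : `a 𝓓 b` iff `a 𝓡 c` and `c 𝓛 b` for some `c`. -/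
def greenD (a b : S) : Prop := ∃ c : S, greenR a c ∧ greenL c b

/-- Green's relation 𝓙 : `a 𝓙 b` iff `S¹ a S¹ = S¹ b S¹`. -/
def greenJ (a b : S) : Prop :=
  {x : WithOne S | ∃ u v : WithOne S, x = u * (a : WithOne S) * v} =
    {x : WithOne S | ∃ u v : WithOne S, x = u * (b : WithOne S) * v}

/-- Mitsch's natural partial order on a semigroup. -/
def natLe (a b : S) : Prop := ∃ x y : S, a = x * b ∧ a = b * y ∧ a = a * y

end GreenDefs

/-- A semigroup is idempotent covered if every element `s` satisfies `s e = s = f s`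
for some idempotents `e`, `f`. -/
def IdemCovered (S : Type*) [Semigroup S] : Prop :=
  ∀ s : S, ∃ e f : S, IsIdempotentElem e ∧ IsIdempotentElem f ∧ s * e = s ∧ f * s = s

/-- A semigroup is regular if every `a` satisfies `a x a = a` for some `x`. -/
def IsRegularSemigroup (S : Type*) [Semigroup S] : Prop :=
  ∀ a : S, ∃ x : S, a * x * a = a

/-- A semigroup is periodic if every element generates a finite monogenic subsemigroup,
i.e. `aᵐ = aⁿ` for some `0 < m < n` (powers computed in `S¹ = WithOne S`). -/
def IsPeriodic (S : Type*) [Semigroup S] : Prop :=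
  ∀ a : S, ∃ m n : ℕ, 0 < m ∧ m < n ∧ (a : WithOne S) ^ m = (a : WithOne S) ^ n

/-- `𝓗` is a left congruence. -/
def IsLeftCongH (S : Type*) [Semigroup S] : Prop :=
  ∀ a b c : S, greenH a b → greenH (c * a) (c * b)

/-- `𝓗` is a right congruence. -/
def IsRightCongH (S : Type*) [Semigroup S] : Prop :=
  ∀ a b c : S, greenH a b → greenH (a * c) (b * c)

/-- A semigroup is completely regular if every element is 𝓗-related to an idempotent. -/
def IsCompletelyRegular (S : Type*) [Semigroup S] : Prop :=
  ∀ a : S, ∃ e : S, IsIdempotentElem e ∧ greenH a e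

section SemidirectProduct

variable {S : Type*} [Semigroup S]

/-- The multiplication of the semidirect product `(S × S) * R₂`:
`(t₁,s₁,σ)·(t₂,s₂,α) = (t₁s₂, s₁s₂, α)` and `(t₁,s₁,τ)·(t₂,s₂,α) = (t₁t₂, s₁t₂, α)`. -/
def sdMul (x y : S × S × R2) : S × S × R2 :=
  match x, y with
  | (t₁, s₁, R2.σ), (_, s₂, α) => (t₁ * s₂, s₁ * s₂, α)
  | (t₁, s₁, R2.τ), (t₂, _, α) => (t₁ * t₂, s₁ * t₂, α)

instance : Mul (S × S × R2) := ⟨sdMul⟩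

theorem sdMul_def (x y : S × S × R2) : x * y = sdMul x y := rfl

instance : Semigroup (S × S × R2) where
  mul_assoc x y z := by
    obtain ⟨t₁, s₁, α₁⟩ := x
    obtain ⟨t₂, s₂, α₂⟩ := y
    obtain ⟨t₃, s₃, α₃⟩ := z
    cases α₁ <;> cases α₂ <;> simp [sdMul_def, sdMul, mul_assoc]

/-- The set `E = {(s,t,α) ∈ E(T*R₂) : s ∈ S¹ t}`. -/
def Eset (S : Type*) [Semigroup S] : Set (S × S × R2) :=
  {x | IsIdempotentElem x ∧ ∃ a : WithOne S, (x.1 : WithOne S) = a * (x.2.1 : WithOne S)}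

/-- `T(S)`: the subsemigroup of the semidirect product generated by `E`. -/
def TS (S : Type*) [Semigroup S] : Subsemigroup (S × S × R2) :=
  Subsemigroup.closure (Eset S)

/-- Green's `𝓛` is a right congruence. -/
theorem greenL_mul_right {S : Type*} [Semigroup S] {a b : S} (hab : greenL a b) (c : S) :
    greenL (a * c) (b * c) := by
  have key : ∀ {a b : S}, greenL a b → ∀ x : WithOne S,
      (∃ u : WithOne S, x = u * ((a * c : S) : WithOne S)) →
      (∃ u : WithOne S, x = u * ((b * c : S) : WithOne S)) := by
    intro a b hab x hx
    obtain ⟨u, rfl⟩ := hx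
    have h1 : (u * (a : WithOne S)) ∈
        {x : WithOne S | ∃ u : WithOne S, x = u * (a : WithOne S)} := ⟨u, rfl⟩
    rw [greenL] at hab
    rw [hab] at h1
    obtain ⟨w, hw⟩ := h1
    refine ⟨w, ?_⟩
    rw [WithOne.coe_mul, WithOne.coe_mul, ← mul_assoc, hw, mul_assoc]
  have hab' : greenL b a := hab.symm
  ext x
  exact ⟨key hab x, key hab' x⟩

/-- `R(S) = {(s,t,α) ∈ T(S) : s 𝓛 t}`, a subsemigroup of `T(S)`. -/
def RS (S : Type*) [Semigroup S] : Subsemigroup ↥(TS S) where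
  carrier := {x | greenL (x : S × S × R2).1 (x : S × S × R2).2.1}
  mul_mem' := by
    rintro ⟨⟨s, t, α⟩, hx⟩ ⟨⟨u, v, β⟩, hy⟩ hxs hys
    simp only [Set.mem_setOf_eq] at hxs hys ⊢
    cases α <;> exact greenL_mul_right hxs _

end SemidirectProduct

/-!
In `T(S)`, right multiplication acts on the pair `(s, t)` by right multiplication of both
coordinates by a common element of `S`. Conversely, if `(s, t) = (u, v) c` with `c ∈ S¹`, then `c`
can be realised in `T(S)`: the last idempotent factor of `(s, t, α)` supplies an idempotent `f` with
`(s, t) f = (s, t)`, and `(c f, f, α)` lies in `T(S)`. So `(s, t, α) ≤ (u, v, β)` in the `𝓡`-order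
iff `(s, t) ∈ (u, v) S¹`. Once `s = a t` and `u = a v`, the equation on first coordinates
follows from the one on second coordinates.
-/

section GreenRLE

variable {S : Type*} [Semigroup S]

/-- The preorder `a ≤ b` iff `a ∈ b S¹`, whose associated equivalence is Green's relation `𝓡`;
as in `greenR`, `S¹` is encoded by `WithOne S`. -/
def greenRLE (a b : S) : Prop := ∃ c : WithOne S, (a : WithOne S) = b * c

theorem greenRLE_iff_subset {a b : S} :
    greenRLE a b ↔ {x : WithOne S | ∃ c : WithOne S, x = (a : WithOne S) * c} ⊆
      {x : WithOne S | ∃ c : WithOne S, x = (b : WithOne S) * c} := by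
  constructor
  · rintro ⟨c, hc⟩ _ ⟨d, rfl⟩
    exact ⟨c * d, by rw [hc, mul_assoc]⟩
  · intro h
    exact h ⟨1, (mul_one _).symm⟩

theorem greenR_iff_greenRLE {a b : S} : greenR a b ↔ greenRLE a b ∧ greenRLE b a := by
  rw [greenR, Set.Subset.antisymm_iff, greenRLE_iff_subset, greenRLE_iff_subset]

theorem greenRLE_iff_eq_or_exists_mul {a b : S} : greenRLE a b ↔ a = b ∨ ∃ c : S, a = b * c := by
  simp only [greenRLE, WithOne.exists, mul_one, WithOne.coe_inj, ← WithOne.coe_mul]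

end GreenRLE

section WithOne

variable {S : Type*} [Semigroup S]

theorem exists_coe_eq_mul_coe (c : WithOne S) (f : S) : ∃ d : S, (d : WithOne S) = c * f := by
  cases c with
  | one => exact ⟨f, (one_mul _).symm⟩
  | coe c => exact ⟨c * f, WithOne.coe_mul c f⟩

theorem mul_eq_mul_of_coe_eq {c : WithOne S} {d f s u : S} (hd : (d : WithOne S) = c * f)
    (hs : (s : WithOne S) = u * c) : u * d = s * f := WithOne.coe_injective <| by
  rw [WithOne.coe_mul, WithOne.coe_mul, hd, hs, mul_assoc]

end WithOne

section TS

variable {S : Type*} [Semigroup S] {s t u v : S} {α β : R2}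

theorem mk_σ_mul (y : S × S × R2) : (s, t, R2.σ) * y = (s * y.2.1, t * y.2.1, y.2.2) := rfl

theorem mk_τ_mul (y : S × S × R2) : (s, t, R2.τ) * y = (s * y.1, t * y.1, y.2.2) := rfl

theorem exists_mul_eq (x y : S × S × R2) : ∃ c : S, x * y = (x.1 * c, x.2.1 * c, y.2.2) := by
  obtain ⟨s, t, _ | _⟩ := x
  · exact ⟨y.2.1, mk_σ_mul y⟩
  · exact ⟨y.1, mk_τ_mul y⟩

theorem isIdempotentElem_mk_σ :
    IsIdempotentElem (s, t, R2.σ) ↔ s * t = s ∧ IsIdempotentElem t := by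
  simp only [IsIdempotentElem, mk_σ_mul, Prod.mk.injEq, and_true]

theorem isIdempotentElem_mk_τ :
    IsIdempotentElem (s, t, R2.τ) ↔ IsIdempotentElem s ∧ t * s = t := by
  simp only [IsIdempotentElem, mk_τ_mul, Prod.mk.injEq, and_true]

theorem exists_eq_mul_of_mem_TS {x : S × S × R2} (hx : x ∈ TS S) :
    ∃ a : WithOne S, (x.1 : WithOne S) = a * x.2.1 := by
  induction hx using Subsemigroup.closure_induction with
  | mem x hx => exact hx.2
  | mul x y _ _ ihx _ =>
    obtain ⟨a, ha⟩ := ihx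
    obtain ⟨c, hc⟩ := exists_mul_eq x y
    exact ⟨a, by simp only [hc, WithOne.coe_mul, ha, mul_assoc]⟩

theorem exists_isIdempotentElem_mul_eq_of_mem_TS {x : S × S × R2} (hx : x ∈ TS S) :
    ∃ f : S, IsIdempotentElem f ∧ x.1 * f = x.1 ∧ x.2.1 * f = x.2.1 := by
  induction hx using Subsemigroup.closure_induction with
  | mem x hx =>
    obtain ⟨s, t, _ | _⟩ := x
    · obtain ⟨hst, ht⟩ := isIdempotentElem_mk_σ.mp hx.1
      exact ⟨t, ht, hst, ht⟩
    · obtain ⟨hs, hts⟩ := isIdempotentElem_mk_τ.mp hx.1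
      exact ⟨s, hs, hs, hts⟩
  | mul x y _ _ _ ihy =>
    obtain ⟨s, t, α⟩ := x
    obtain ⟨f, hf, hyf₁, hyf₂⟩ := ihy
    refine ⟨f, hf, ?_⟩
    cases α <;> simp only [mk_σ_mul, mk_τ_mul, mul_assoc, hyf₁, hyf₂, and_self]

theorem mk_mem_TS_of_mul_eq {c f : S} (hf : IsIdempotentElem f) (hcf : c * f = c) (α : R2) :
    (c, f, α) ∈ TS S := by
  have hσ : (c, f, R2.σ) ∈ TS S :=
    Subsemigroup.subset_closure
      ⟨isIdempotentElem_mk_σ.mpr ⟨hcf, hf⟩, c, by rw [← WithOne.coe_mul, hcf]⟩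
  have hτ : (f, f, R2.τ) ∈ TS S :=
    Subsemigroup.subset_closure ⟨isIdempotentElem_mk_τ.mpr ⟨hf, hf⟩, 1, (one_mul _).symm⟩
  cases α with
  | σ => exact hσ
  | τ => simpa only [mk_σ_mul, hcf, hf.eq] using mul_mem hσ hτ

theorem exists_mem_TS_mul_eq {c f : S} (hy : (u, v, β) ∈ TS S)
    (hf : IsIdempotentElem f) (hcf : c * f = c) (α : R2) :
    ∃ z ∈ TS S, (u, v, β) * z = (u * c, v * c, α) := by
  have hz := mk_mem_TS_of_mul_eq hf hcf α
  cases β with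
  | τ => exact ⟨_, hz, mk_τ_mul _⟩
  | σ =>
    -- `(g, g, τ)` turns `(u, v, σ)` into `(u, v, τ)`, which reads the first coordinate of a factor.
    obtain ⟨g, hg, hug, hvg⟩ := exists_isIdempotentElem_mul_eq_of_mem_TS hy
    refine ⟨_, mul_mem (mk_mem_TS_of_mul_eq hg hg R2.τ) hz, ?_⟩
    rw [← mul_assoc, mk_σ_mul, hug, hvg, mk_τ_mul]

theorem exists_eq_mul_of_greenRLE_TS (hx : (s, t, α) ∈ TS S) (hy : (u, v, β) ∈ TS S)
    (hxy : greenRLE (⟨(s, t, α), hx⟩ : TS S) ⟨(u, v, β), hy⟩) :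
    ∃ c : WithOne S, (s : WithOne S) = u * c ∧ (t : WithOne S) = v * c := by
  obtain heq | ⟨z, hz⟩ := greenRLE_iff_eq_or_exists_mul.mp hxy
  · obtain ⟨rfl, rfl, -⟩ : s = u ∧ t = v ∧ α = β := by
      simpa only [Subtype.mk.injEq, Prod.mk.injEq] using heq
    exact ⟨1, (mul_one _).symm, (mul_one _).symm⟩
  · obtain ⟨c, hc⟩ := exists_mul_eq (u, v, β) z
    obtain ⟨rfl, rfl, -⟩ : s = u * c ∧ t = v * c ∧ α = z.1.2.2 := by
      simpa only [Prod.mk.injEq] using (congrArg Subtype.val hz).trans hc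
    exact ⟨c, WithOne.coe_mul _ _, WithOne.coe_mul _ _⟩

theorem greenRLE_TS_of_eq_mul (hx : (s, t, α) ∈ TS S) (hy : (u, v, β) ∈ TS S) {c : WithOne S}
    (hs : (s : WithOne S) = u * c) (ht : (t : WithOne S) = v * c) :
    greenRLE (⟨(s, t, α), hx⟩ : TS S) ⟨(u, v, β), hy⟩ := by
  obtain ⟨f, hf, hsf, htf⟩ := exists_isIdempotentElem_mul_eq_of_mem_TS hx
  obtain ⟨d, hd⟩ := exists_coe_eq_mul_coe c f
  have hdf : d * f = d := WithOne.coe_injective <| by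
    rw [WithOne.coe_mul, hd, mul_assoc, ← WithOne.coe_mul, hf.eq]
  have hud : u * d = s := by rw [mul_eq_mul_of_coe_eq hd hs, hsf]
  have hvd : v * d = t := by rw [mul_eq_mul_of_coe_eq hd ht, htf]
  obtain ⟨z, hz, hyz⟩ := exists_mem_TS_mul_eq hy hf hdf α
  rw [hud, hvd] at hyz
  exact greenRLE_iff_eq_or_exists_mul.mpr (.inr ⟨⟨z, hz⟩, Subtype.ext hyz.symm⟩)

theorem greenRLE_TS_iff_of_eq_mul {a : WithOne S} (hx : (s, t, α) ∈ TS S) (hy : (u, v, β) ∈ TS S)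
    (hs : (s : WithOne S) = a * t) (hu : (u : WithOne S) = a * v) :
    greenRLE (⟨(s, t, α), hx⟩ : TS S) ⟨(u, v, β), hy⟩ ↔ greenRLE t v := by
  constructor
  · intro hxy
    obtain ⟨c, -, ht⟩ := exists_eq_mul_of_greenRLE_TS hx hy hxy
    exact ⟨c, ht⟩
  · rintro ⟨c, ht⟩
    exact greenRLE_TS_of_eq_mul hx hy (by rw [hs, hu, ht, mul_assoc]) ht

theorem statement_7_general (hx : (s, t, α) ∈ TS S) (hy : (u, v, β) ∈ TS S) :
    greenR (⟨(s, t, α), hx⟩ : TS S) ⟨(u, v, β), hy⟩ ↔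
      greenR t v ∧ ∃ a : WithOne S, (s : WithOne S) = a * t ∧ (u : WithOne S) = a * v := by
  simp only [greenR_iff_greenRLE]
  constructor
  · rintro ⟨hxy, hyx⟩
    obtain ⟨c, hsc, htc⟩ := exists_eq_mul_of_greenRLE_TS hx hy hxy
    obtain ⟨a, hu⟩ : ∃ a : WithOne S, (u : WithOne S) = a * v := exists_eq_mul_of_mem_TS hy
    have hs : (s : WithOne S) = a * t := by rw [hsc, hu, htc, mul_assoc]
    exact ⟨⟨(greenRLE_TS_iff_of_eq_mul hx hy hs hu).mp hxy,
      (greenRLE_TS_iff_of_eq_mul hy hx hu hs).mp hyx⟩, a, hs, hu⟩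
  · rintro ⟨⟨htv, hvt⟩, a, hs, hu⟩
    exact ⟨(greenRLE_TS_iff_of_eq_mul hx hy hs hu).mpr htv,
      (greenRLE_TS_iff_of_eq_mul hy hx hu hs).mpr hvt⟩

end TS

/-- description of Green's relation 𝓡 on `T(S)`. -/
theorem statement_7 {S : Type*} [Semigroup S] (hS : IdemCovered S)
    (s t u v : S) (α β : R2)
    (hx : ((s, t, α) : S × S × R2) ∈ TS S) (hy : ((u, v, β) : S × S × R2) ∈ TS S) :
    greenR (⟨(s, t, α), hx⟩ : ↥(TS S)) ⟨(u, v, β), hy⟩ ↔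
      greenR t v ∧ ∃ a : WithOne S, (s : WithOne S) = a * (t : WithOne S) ∧
        (u : WithOne S) = a * (v : WithOne S) := by
  exact statement_7_general hx hy

end SemibandEmbed
end

section
/- Let S be an idempotent covered semigroup and let (s,t,α), (u,v,β) ∈ T(S). Then (s,t,α) 𝓓 (u,v,β) in T(S) if and only if t 𝓓 v in S. -/
namespace SemibandEmbed

/-! The first two coordinates of a product `(s, t, α) * (c, d, β)` are `s * w` and `t * w` for a
common `w`, namely `d` if `α = σ` and `c` if `α = τ`. Hence `T(S)` consists exactly of the triples
with `s ∈ S¹ t` whose middle entry `t` has idempotent left and right identities, which makes both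
preorders of Green on `T(S)` explicit: `(s, t, α) ∈ (u, v, β) T(S)¹` iff `(s, t) = (u * w, v * w)`
for some `w`, and `(s, t, α) ∈ T(S)¹ (u, v, β)` iff `t ∈ S¹ v` and `α = β`. A witness `c` of
`t 𝓡 c 𝓛 v` with `c = t * w` then lifts to `(s * w, c, β)`. The multipliers come from `S¹` and need
not lie in `T(S)`; multiplying them on both sides by idempotent identities of the given elements
puts them there. -/

section GreenPreorders

variable {S : Type*} [Semigroup S] {a b c e f : S}

/-- The preorder `≤_𝓡` of Green, `a ∈ b S¹`, with the two cases for the multiplier spelled out so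
that no computation in `S¹` is needed. -/
def greenLeR (a b : S) : Prop := a = b ∨ ∃ u, a = b * u

/-- The preorder `≤_𝓛` of Green, `a ∈ S¹ b`, spelled out like `greenLeR`. -/
def greenLeL (a b : S) : Prop := a = b ∨ ∃ u, a = u * b

theorem greenLeR_iff_exists_withOne :
    greenLeR a b ↔ ∃ u : WithOne S, (a : WithOne S) = b * u := by
  constructor
  · rintro (rfl | ⟨u, rfl⟩)
    · exact ⟨1, (mul_one _).symm⟩
    · exact ⟨u, WithOne.coe_mul _ _⟩
  · rintro ⟨u, hu⟩
    cases u with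
    | one => exact .inl (WithOne.coe_inj.1 (hu.trans (mul_one _)))
    | coe u => exact .inr ⟨u, WithOne.coe_inj.1 hu⟩

theorem greenLeL_iff_exists_withOne :
    greenLeL a b ↔ ∃ u : WithOne S, (a : WithOne S) = u * b := by
  constructor
  · rintro (rfl | ⟨u, rfl⟩)
    · exact ⟨1, (one_mul _).symm⟩
    · exact ⟨u, WithOne.coe_mul _ _⟩
  · rintro ⟨u, hu⟩
    cases u with
    | one => exact .inl (WithOne.coe_inj.1 (hu.trans (one_mul _)))
    | coe u => exact .inr ⟨u, WithOne.coe_inj.1 hu⟩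

theorem greenR_iff : greenR a b ↔ greenLeR a b ∧ greenLeR b a := by
  simp only [greenLeR_iff_exists_withOne]
  constructor
  · intro h
    exact ⟨h.subset ⟨1, (mul_one _).symm⟩, h.superset ⟨1, (mul_one _).symm⟩⟩
  · rintro ⟨⟨p, hp⟩, ⟨q, hq⟩⟩
    refine Set.Subset.antisymm ?_ ?_ <;> rintro _ ⟨u, rfl⟩
    · exact ⟨p * u, by rw [hp, mul_assoc]⟩
    · exact ⟨q * u, by rw [hq, mul_assoc]⟩

theorem greenL_iff : greenL a b ↔ greenLeL a b ∧ greenLeL b a := by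
  simp only [greenLeL_iff_exists_withOne]
  constructor
  · intro h
    exact ⟨h.subset ⟨1, (one_mul _).symm⟩, h.superset ⟨1, (one_mul _).symm⟩⟩
  · rintro ⟨⟨p, hp⟩, ⟨q, hq⟩⟩
    refine Set.Subset.antisymm ?_ ?_ <;> rintro _ ⟨u, rfl⟩
    · exact ⟨u * p, by rw [hp, mul_assoc]⟩
    · exact ⟨u * q, by rw [hq, mul_assoc]⟩

theorem greenLeL.mul_left (h : greenLeL a b) (c : S) : greenLeL (c * a) b := by
  rcases h with rfl | ⟨u, rfl⟩
  · exact .inr ⟨c, rfl⟩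
  · exact .inr ⟨c * u, (mul_assoc _ _ _).symm⟩

theorem greenLeL.mul_right (h : greenLeL a b) (c : S) : greenLeL (a * c) (b * c) := by
  rcases h with rfl | ⟨u, rfl⟩
  · exact .inl rfl
  · exact .inr ⟨u, mul_assoc _ _ _⟩

theorem greenLeL.mul_eq_self (h : greenLeL a b) (hb : b * e = b) : a * e = a := by
  rcases h with rfl | ⟨u, rfl⟩
  · exact hb
  · rw [mul_assoc, hb]

theorem greenLeR.mul_eq_self (h : greenLeR a b) (hb : f * b = b) : f * a = a := by
  rcases h with rfl | ⟨u, rfl⟩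
  · exact hb
  · rw [← mul_assoc, hb]

theorem greenLeL.exists_eq_mul_of_mul (h : greenLeL a (b * c)) :
    ∃ p, greenLeL p b ∧ a = p * c := by
  rcases h with rfl | ⟨u, rfl⟩
  · exact ⟨b, .inl rfl, rfl⟩
  · exact ⟨u * b, .inr ⟨u, rfl⟩, (mul_assoc _ _ _).symm⟩

end GreenPreorders

section IdemCoveredElem

variable {S : Type*} [Semigroup S] {a b c e f : S}

/-- The element `s` has an idempotent right identity and an idempotent left identity. This is
`IdemCovered` for a single element, and the condition on the middle entry of a member of `T(S)`.
-/
def IsIdemCoveredElem (s : S) : Prop :=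
  ∃ e f : S, IsIdempotentElem e ∧ IsIdempotentElem f ∧ s * e = s ∧ f * s = s

theorem isIdemCoveredElem_mul_mul (hf : IsIdempotentElem f)
    (he : IsIdempotentElem e) (w : S) : IsIdemCoveredElem (f * w * e) :=
  ⟨e, f, he, hf, by rw [mul_assoc, he.eq], by rw [← mul_assoc, ← mul_assoc, hf.eq]⟩

theorem IsIdemCoveredElem.of_greenLeR_of_greenLeL (ha : IsIdemCoveredElem a)
    (hb : IsIdemCoveredElem b) (hca : greenLeR c a) (hcb : greenLeL c b) :
    IsIdemCoveredElem c := by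
  obtain ⟨-, f, -, hf, -, hfa⟩ := ha
  obtain ⟨e, -, he, -, hbe, -⟩ := hb
  exact ⟨e, f, he, hf, hcb.mul_eq_self hbe, hca.mul_eq_self hfa⟩

-- Writing `e = x * a`, the idempotent identities of `a` are `x * a` and `a * x`.
theorem isIdemCoveredElem_of_greenLeL (hea : greenLeL e a) (hae : a * e = a) :
    IsIdemCoveredElem a := by
  rcases hea with rfl | ⟨x, rfl⟩
  · exact ⟨e, e, hae, hae, hae, hae⟩
  · refine ⟨x * a, a * x, ?_, ?_, hae, by rw [mul_assoc, hae]⟩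
    · rw [IsIdempotentElem, mul_assoc, hae]
    · rw [IsIdempotentElem, ← mul_assoc, mul_assoc a, hae]

theorem IsIdemCoveredElem.exists_eq_mul_right (hb : IsIdemCoveredElem b) (h : greenLeR a b) :
    ∃ w, a = b * w := by
  rcases h with rfl | h
  · obtain ⟨e, -, -, -, hae, -⟩ := hb
    exact ⟨e, hae.symm⟩
  · exact h

theorem IsIdemCoveredElem.exists_eq_mul_left (ha : IsIdemCoveredElem a)
    (hb : IsIdemCoveredElem b) (h : greenLeL a b) : ∃ w, IsIdemCoveredElem w ∧ a = w * b := by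
  obtain ⟨-, f, -, hf, -, hfa⟩ := ha
  obtain ⟨-, g, -, hg, -, hgb⟩ := hb
  obtain ⟨w, rfl⟩ : ∃ w, a = w * b := by
    rcases h with rfl | h
    · exact ⟨g, hgb.symm⟩
    · exact h
  exact ⟨f * w * g, isIdemCoveredElem_mul_mul hf hg w, by rw [mul_assoc, hgb, mul_assoc, hfa]⟩

end IdemCoveredElem

section SemidirectProduct

/-- The action of `R₂` behind the semidirect product: `α.select s t` is the coordinate of `(s, t)`
by which a left factor labelled `α` is multiplied. -/
def R2.select {S : Type*} : R2 → S → S → S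
  | .σ, _, t => t
  | .τ, s, _ => s

theorem R2.select_self {S : Type*} (α : R2) (s : S) : α.select s s = s := by
  cases α <;> rfl

variable {S : Type*} [Semigroup S] {s t u v c e : S} {α β : R2}

theorem mk_mul_mk (s t u v : S) (α β : R2) :
    ((s, t, α) : S × S × R2) * (u, v, β) = (s * α.select u v, t * α.select u v, β) := by
  cases α <;> rfl

theorem greenLeL.select (h : greenLeL s t) (α : R2) : greenLeL (α.select s t) t := by
  cases α
  · exact .inl rfl
  · exact h

theorem mk_mem_Eset_iff :
    ((s, t, α) : S × S × R2) ∈ Eset S ↔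
      s * α.select s t = s ∧ t * α.select s t = t ∧ greenLeL s t := by
  simp only [Eset, Set.mem_ofPred_eq, IsIdempotentElem, mk_mul_mk, Prod.mk.injEq, and_true,
    ← greenLeL_iff_exists_withOne, and_assoc]

theorem greenLeL_and_isIdemCoveredElem_of_mem_TS {x : S × S × R2} (hx : x ∈ TS S) :
    greenLeL x.1 x.2.1 ∧ IsIdemCoveredElem x.2.1 := by
  induction hx using Subsemigroup.closure_induction with
  | mem x hx =>
    obtain ⟨-, hidem, hle⟩ := mk_mem_Eset_iff.1 hx
    exact ⟨hle, isIdemCoveredElem_of_greenLeL (hle.select _) hidem⟩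
  | mul x y _ _ hx hy =>
    obtain ⟨s, t, α⟩ := x
    obtain ⟨u, v, β⟩ := y
    rw [mk_mul_mk]
    exact ⟨hx.1.mul_right _,
      hx.2.of_greenLeR_of_greenLeL hy.2 (.inr ⟨_, rfl⟩) ((hy.1.select α).mul_left t)⟩

theorem mk_mem_TS_of_mul_eq_self (he : IsIdempotentElem e) (hs : s * e = s) (α : R2) :
    ((s, e, α) : S × S × R2) ∈ TS S := by
  have hσ : ((s, e, R2.σ) : S × S × R2) ∈ TS S :=
    Subsemigroup.subset_closure (mk_mem_Eset_iff.2 ⟨hs, he, .inr ⟨s, hs.symm⟩⟩)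
  have hτ : ((e, e, R2.τ) : S × S × R2) ∈ TS S :=
    Subsemigroup.subset_closure (mk_mem_Eset_iff.2 ⟨he, he, .inl rfl⟩)
  cases α
  · exact hσ
  · simpa only [mk_mul_mk, R2.select_self, hs, he.eq] using mul_mem hσ hτ

theorem mk_mem_TS_iff :
    ((s, t, α) : S × S × R2) ∈ TS S ↔ greenLeL s t ∧ IsIdemCoveredElem t := by
  refine ⟨greenLeL_and_isIdemCoveredElem_of_mem_TS, ?_⟩
  rintro ⟨hst, e, f, he, hf, hte, hft⟩
  obtain ⟨p, hpf, rfl⟩ : ∃ p, greenLeL p f ∧ s = p * t :=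
    (hft.symm ▸ hst : greenLeL s (f * t)).exists_eq_mul_of_mul
  have hp : ((p, f, R2.τ) : S × S × R2) ∈ TS S :=
    mk_mem_TS_of_mul_eq_self hf (hpf.mul_eq_self hf) _
  have ht : ((t, e, α) : S × S × R2) ∈ TS S := mk_mem_TS_of_mul_eq_self he hte α
  simpa only [mk_mul_mk, R2.select, hft] using mul_mem hp ht

variable {hx : ((s, t, α) : S × S × R2) ∈ TS S} {hy : ((u, v, β) : S × S × R2) ∈ TS S}

theorem greenLeR_mk_iff :
    greenLeR (⟨(s, t, α), hx⟩ : TS S) ⟨(u, v, β), hy⟩ ↔ ∃ w, s = u * w ∧ t = v * w := by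
  obtain ⟨hst, e, -, he, -, hte, -⟩ := mk_mem_TS_iff.1 hx
  obtain ⟨huv, g, -, hg, -, hvg, -⟩ := mk_mem_TS_iff.1 hy
  constructor
  · rintro (heq | ⟨⟨⟨c, d, γ⟩, hz⟩, heq⟩)
    · obtain ⟨rfl, rfl, rfl⟩ : s = u ∧ t = v ∧ α = β := by simpa using heq
      exact ⟨e, (hst.mul_eq_self hte).symm, hte.symm⟩
    · have hmul := congrArg Subtype.val heq
      simp only [MulMemClass.coe_mul, mk_mul_mk, Prod.mk.injEq] at hmul
      exact ⟨_, hmul.1, hmul.2.1⟩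
  · rintro ⟨w, rfl, rfl⟩
    have hz : ((g * w * e, g * w * e, α) : S × S × R2) ∈ TS S :=
      mk_mem_TS_iff.2 ⟨.inl rfl, isIdemCoveredElem_mul_mul hg he w⟩
    refine .inr ⟨⟨_, hz⟩, Subtype.ext ?_⟩
    simp only [MulMemClass.coe_mul, mk_mul_mk, R2.select_self, ← mul_assoc,
      huv.mul_eq_self hvg, hvg, hst.mul_eq_self hte, hte]

theorem greenLeL_mk_iff :
    greenLeL (⟨(s, t, α), hx⟩ : TS S) ⟨(u, v, β), hy⟩ ↔ greenLeL t v ∧ α = β := by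
  obtain ⟨hst, ht⟩ := mk_mem_TS_iff.1 hx
  obtain ⟨huv, hv⟩ := mk_mem_TS_iff.1 hy
  constructor
  · rintro (heq | ⟨⟨⟨c, d, γ⟩, hz⟩, heq⟩)
    · obtain ⟨-, rfl, rfl⟩ : s = u ∧ t = v ∧ α = β := by simpa using heq
      exact ⟨.inl rfl, rfl⟩
    · have hmul := congrArg Subtype.val heq
      simp only [MulMemClass.coe_mul, mk_mul_mk, Prod.mk.injEq] at hmul
      obtain ⟨-, rfl, rfl⟩ := hmul
      exact ⟨(huv.select γ).mul_left d, rfl⟩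
  · rintro ⟨htv, rfl⟩
    obtain ⟨w, hw, rfl⟩ := ht.exists_eq_mul_left hv htv
    obtain ⟨p, hpw, rfl⟩ := hst.exists_eq_mul_of_mul
    have hz : ((p, w, R2.σ) : S × S × R2) ∈ TS S := mk_mem_TS_iff.2 ⟨hpw, hw⟩
    exact .inr ⟨⟨_, hz⟩, rfl⟩

theorem greenL_mk_iff :
    greenL (⟨(s, t, α), hx⟩ : TS S) ⟨(u, v, β), hy⟩ ↔ greenL t v ∧ α = β := by
  simp only [greenL_iff, greenLeL_mk_iff, eq_comm (a := β), ← and_and_right]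

theorem greenR_of_greenR_mk (h : greenR (⟨(s, t, α), hx⟩ : TS S) ⟨(u, v, β), hy⟩) :
    greenR t v := by
  simp only [greenR_iff, greenLeR_mk_iff] at h ⊢
  obtain ⟨⟨w, -, hw⟩, ⟨w', -, hw'⟩⟩ := h
  exact ⟨.inr ⟨w, hw⟩, .inr ⟨w', hw'⟩⟩

theorem exists_greenR_mk (hx : ((s, t, α) : S × S × R2) ∈ TS S) (hc : IsIdemCoveredElem c)
    (htc : greenR t c) (β : R2) :
    ∃ (p : S) (hp : ((p, c, β) : S × S × R2) ∈ TS S),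
      greenR (⟨(s, t, α), hx⟩ : TS S) ⟨(p, c, β), hp⟩ := by
  obtain ⟨hst, ht⟩ := mk_mem_TS_iff.1 hx
  obtain ⟨w, hw⟩ : ∃ w, t = c * w := hc.exists_eq_mul_right (greenR_iff.1 htc).1
  obtain ⟨w', rfl⟩ : ∃ w', c = t * w' := ht.exists_eq_mul_right (greenR_iff.1 htc).2
  have hs : s * (w' * w) = s := hst.mul_eq_self (by rw [← mul_assoc, ← hw])
  refine ⟨s * w', mk_mem_TS_iff.2 ⟨hst.mul_right w', hc⟩, greenR_iff.2 ⟨?_, ?_⟩⟩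
  · exact greenLeR_mk_iff.2 ⟨w, by rw [mul_assoc, hs], hw⟩
  · exact greenLeR_mk_iff.2 ⟨w', rfl, rfl⟩

end SemidirectProduct

theorem statement_10_general {S : Type*} [Semigroup S] (s t u v : S) (α β : R2)
    (hx : ((s, t, α) : S × S × R2) ∈ TS S) (hy : ((u, v, β) : S × S × R2) ∈ TS S) :
    greenD (⟨(s, t, α), hx⟩ : ↥(TS S)) ⟨(u, v, β), hy⟩ ↔ greenD t v := by
  constructor
  · rintro ⟨⟨⟨p, c, γ⟩, hz⟩, hR, hL⟩
    exact ⟨c, greenR_of_greenR_mk hR, (greenL_mk_iff.1 hL).1⟩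
  · rintro ⟨c, hR, hL⟩
    have hc : IsIdemCoveredElem c :=
      (mk_mem_TS_iff.1 hx).2.of_greenLeR_of_greenLeL (mk_mem_TS_iff.1 hy).2
        (greenR_iff.1 hR).2 (greenL_iff.1 hL).1
    obtain ⟨p, hp, hRp⟩ := exists_greenR_mk hx hc hR β
    exact ⟨⟨(p, c, β), hp⟩, hRp, greenL_mk_iff.2 ⟨hL, rfl⟩⟩

/-- description of Green's relation 𝓓 on `T(S)`. -/
theorem statement_10 {S : Type*} [Semigroup S] (hS : IdemCovered S)
    (s t u v : S) (α β : R2)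
    (hx : ((s, t, α) : S × S × R2) ∈ TS S) (hy : ((u, v, β) : S × S × R2) ∈ TS S) :
    greenD (⟨(s, t, α), hx⟩ : ↥(TS S)) ⟨(u, v, β), hy⟩ ↔ greenD t v :=
  statement_10_general s t u v α β hx hy

end SemibandEmbed
end
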